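/- arXiv:2407.12713 — 2 statements merged into one kernel-verified Lean document; each statement's English description precedes it below -/
import Mathlib

section
/- Let G be a finite group and η a finite-dimensional complex representation of G with character χ^η and dimension d_η. Let K be the tensor product Markov chain on Irr(G) associated to η. Then for every integer r ≥ 1 and every ρ ∈ Irr(G), the r-step transition probability from the trivial representation 𝟙 satisfies K^r(𝟙, ρ) = d_ρ · m_ρ(η^{⊗r}) / d_η^r, where m_ρ(η^{⊗r}) denotes the multiplicity of ρ in the r-fold tensor power η^{⊗r} (equivalently, m_ρ(η^{⊗r}) = (1/|G|)·Σ_{g∈G} χ^η(g)^r · conj(χ^ρ(g)) ). -/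
open CategoryTheory MonoidalCategory Finset

noncomputable section

/-- The multiplicity of the irreducible representation `ρ` in a finite-dimensional
representation `W`: the dimension of the space of `G`-equivariant maps `ρ ⟶ W`
(by Schur's lemma this equals the multiplicity of `ρ` in a decomposition of `W`
into irreducibles). -/
def multIn {G : Type} [Monoid G] (ρ W : FDRep ℂ G) : ℕ :=
  Module.finrank ℂ (ρ ⟶ W)

/-- The transition matrix of the tensor product Markov chain on (an index set `ι` for)
the irreducible representations of `G` associated with a fixed representation `η`:
`K(λ,ρ) = m_ρ(λ⊗η)·d_ρ/(d_λ·d_η)`. -/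
def tensorChain {G : Type} [Monoid G] {ι : Type} (rep : ι → FDRep ℂ G) (η : FDRep ℂ G) :
    Matrix ι ι ℝ := fun l r =>
  (multIn (rep r) (MonoidalCategory.tensorObj (rep l) η) * Module.finrank ℂ (rep r) : ℝ) /
    (Module.finrank ℂ (rep l) * Module.finrank ℂ η)

/-- The Plancherel measure `π(ρ) = d_ρ²/|G|` on the irreducible representations of `G`. -/
def plancherel {G : Type} [Monoid G] [Fintype G] {ι : Type} (rep : ι → FDRep ℂ G) (i : ι) :
    ℝ :=
  (Module.finrank ℂ (rep i) : ℝ) ^ 2 / (Fintype.card G : ℝ)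

/-- The total variation distance between two probability distributions on a finite set:
`‖P − Q‖_TV = (1/2)·Σ_x |P x − Q x|`. -/
def tvDist {X : Type*} [Fintype X] (P Q : X → ℝ) : ℝ :=
  (1 / 2) * ∑ x, |P x - Q x|


/-- The `r`-fold tensor power `η^{⊗r}` of a representation. -/
def tensorPow {G : Type} [Monoid G] (η : FDRep ℂ G) : ℕ → FDRep ℂ G
  | 0 => 𝟙_ (FDRep ℂ G)
  | n + 1 => MonoidalCategory.tensorObj (tensorPow η n) η

open Limits in
/-- The character of a biproduct is the sum of the characters. -/
theorem FDRep.char_biprod {G : Type} [Group G] (W U : FDRep ℂ G) (g : G) :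
    (W ⊞ U).character g = W.character g + U.character g := by
  let lin {X Y : FDRep ℂ G} (f : X ⟶ Y) : X →ₗ[ℂ] Y := f.hom.hom.hom
  have hcomm {X Y : FDRep ℂ G} (f : X ⟶ Y) : Y.ρ g ∘ₗ lin f = lin f ∘ₗ X.ρ g := by
    have h := f.comm g
    exact (congrArg (fun t => t.hom.hom) h).symm
  have htrace {X Y : FDRep ℂ G} (f : X ⟶ Y) (s : Y ⟶ X) (hfs : f ≫ s = 𝟙 X) :
      LinearMap.trace ℂ Y (Y.ρ g ∘ₗ (lin f ∘ₗ lin s)) = X.character g := by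
    have hid : lin s ∘ₗ lin f = LinearMap.id :=
      congrArg lin hfs
    rw [← LinearMap.comp_assoc, hcomm, LinearMap.comp_assoc, LinearMap.trace_comp_comm',
      LinearMap.comp_assoc, hid, LinearMap.comp_id]
    rfl
  have htotal : lin (biprod.inl : W ⟶ W ⊞ U) ∘ₗ lin (biprod.fst : W ⊞ U ⟶ W) +
      lin (biprod.inr : U ⟶ W ⊞ U) ∘ₗ lin (biprod.snd : W ⊞ U ⟶ U) = LinearMap.id :=
    congrArg lin (biprod.total (X := W) (Y := U))
  rw [← htrace _ _ (biprod.inl_fst (X := W) (Y := U)),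
    ← htrace _ _ (biprod.inr_snd (X := W) (Y := U)), ← map_add, ← LinearMap.comp_add, htotal,
    LinearMap.comp_id]
  rfl

open Limits in
theorem FDRep.isZero_of_finrank_eq_zero {G : Type} [Group G] (V : FDRep ℂ G)
    (h : Module.finrank ℂ V = 0) : IsZero V := by
  rw [IsZero.iff_id_eq_zero]
  have : Subsingleton V := Module.finrank_zero_iff.mp h
  ext x
  exact Subsingleton.elim (α := V) _ _

theorem FDRep.finrank_ne_zero_of_simple {G : Type} [Group G] (V : FDRep ℂ G) [Simple V] :
    Module.finrank ℂ V ≠ 0 := fun h =>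
  id_nonzero V ((Limits.IsZero.iff_id_eq_zero V).mp (V.isZero_of_finrank_eq_zero h))

open Limits in
/-- A nonzero representation of a finite group is simple or a biproduct of two nonzero
representations. -/
theorem FDRep.simple_or_exists_iso_biprod {G : Type} [Group G] [Finite G] (V : FDRep ℂ G)
    (hV : ¬ IsZero V) :
    Simple V ∨ ∃ W U : FDRep ℂ G, ¬ IsZero W ∧ ¬ IsZero U ∧ Nonempty (V ≅ W ⊞ U) := by
  by_contra! hcon
  obtain ⟨hsimple, hdecomp⟩ := hcon
  refine hsimple ⟨fun {W} f hf => ⟨fun hiso hzero => ?_, fun hne => ?_⟩⟩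
  · rw [hzero, isIsoZero_iff_source_target_isZero] at hiso
    exact hV hiso.2
  · by_contra hiso
    have hsplit : IsSplitMono f :=
      ⟨⟨⟨Injective.factorThru (𝟙 W) f, Injective.comp_factorThru (𝟙 W) f⟩⟩⟩
    have hbilimit := isBilimitBinaryBiconeOfIsSplitMonoOfCokernel (cokernelIsCokernel f)
    refine (hdecomp W (cokernel f) (fun hW => hne (hW.eq_zero_of_src f)) fun hU => hiso ?_).false
      (biprod.uniqueUpToIso _ _ hbilimit)
    have := Preadditive.epi_of_isZero_cokernel f hU
    exact isIso_of_mono_of_epi f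

/-- The multiplicity as the scalar product of characters. -/
theorem multIn_eq_sum_char {G : Type} [Group G] [Fintype G] (V W : FDRep ℂ G) :
    (multIn V W : ℂ) = (Nat.card G : ℂ)⁻¹ * ∑ g : G, W.character g * V.character g⁻¹ := by
  have := invertibleOfNonzero (NeZero.ne (Nat.card G : ℂ))
  exact (FDRep.scalar_product_char_eq_finrank_equivariant V W).symm

/-- Every character is the sum of the irreducible characters weighted by multiplicities. -/
theorem character_eq_sum_multIn {G : Type} [Group G] [Fintype G] {ι : Type} [Fintype ι]
    (rep : ι → FDRep ℂ G) (hsimple : ∀ i, Simple (rep i))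
    (hcomplete : ∀ V : FDRep ℂ G, Simple V → ∃ i, Nonempty (V ≅ rep i))
    (hinj : ∀ i j : ι, Nonempty (rep i ≅ rep j) → i = j) (V : FDRep ℂ G) (g : G) :
    V.character g = ∑ i, (multIn (rep i) V : ℂ) * (rep i).character g := by
  classical
  induction hn : Module.finrank ℂ V using Nat.strong_induction_on generalizing V with
  | _ n ih =>
  by_cases hV : Limits.IsZero V
  · have hchar (h : G) : V.character h = 0 := by
      have hid := (Limits.IsZero.iff_id_eq_zero V).mp hV
      have hzero : (LinearMap.id : V →ₗ[ℂ] V) = 0 := congrArg (fun f => f.hom.hom.hom) hid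
      rw [FDRep.character, ← LinearMap.comp_id (V.ρ h), hzero, LinearMap.comp_zero, map_zero]
    simp [multIn_eq_sum_char, hchar]
  rcases V.simple_or_exists_iso_biprod hV with hVs | ⟨W, U, hW, hU, ⟨e⟩⟩
  · obtain ⟨j, ⟨e⟩⟩ := hcomplete V hVs
    have hmult (i : ι) : multIn (rep i) V = if i = j then 1 else 0 := by
      have := hsimple i
      rw [multIn, FDRep.finrank_hom_simple_simple]
      refine if_congr ⟨fun ⟨f⟩ => hinj i j ⟨f ≪≫ e⟩, ?_⟩ rfl rfl
      rintro rfl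
      exact ⟨e.symm⟩
    simp [hmult, FDRep.char_iso e]
  · have hchar (h : G) : V.character h = W.character h + U.character h := by
      rw [FDRep.char_iso e, FDRep.char_biprod]
    have hdim : Module.finrank ℂ V = Module.finrank ℂ W + Module.finrank ℂ U := by
      have h := hchar 1
      simp only [FDRep.char_one] at h
      exact_mod_cast h
    have hWdim := mt W.isZero_of_finrank_eq_zero hW
    have hUdim := mt U.isZero_of_finrank_eq_zero hU
    have hmult (i : ι) : (multIn (rep i) V : ℂ) = multIn (rep i) W + multIn (rep i) U := by
      simp only [multIn_eq_sum_char, hchar, add_mul, Finset.sum_add_distrib, mul_add]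
    rw [hchar, ih _ (by omega) W rfl, ih _ (by omega) U rfl, ← Finset.sum_add_distrib]
    exact Finset.sum_congr rfl fun i _ => by rw [hmult, add_mul]

/-- Multiplicities in `V ⊗ η` are computed from those in `λ ⊗ η`, for `λ` irreducible. -/
theorem multIn_tensorObj {G : Type} [Group G] [Fintype G] {ι : Type} [Fintype ι]
    (rep : ι → FDRep ℂ G) (hsimple : ∀ i, Simple (rep i))
    (hcomplete : ∀ V : FDRep ℂ G, Simple V → ∃ i, Nonempty (V ≅ rep i))
    (hinj : ∀ i j : ι, Nonempty (rep i ≅ rep j) → i = j) (V η W : FDRep ℂ G) :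
    multIn W (MonoidalCategory.tensorObj V η) =
      ∑ i, multIn (rep i) V * multIn W (MonoidalCategory.tensorObj (rep i) η) := by
  have key : (multIn W (MonoidalCategory.tensorObj V η) : ℂ) =
      ∑ i, (multIn (rep i) V : ℂ) * multIn W (MonoidalCategory.tensorObj (rep i) η) := by
    simp only [multIn_eq_sum_char W, FDRep.char_tensor, Pi.mul_apply,
      character_eq_sum_multIn rep hsimple hcomplete hinj V, Finset.mul_sum, Finset.sum_mul]
    rw [Finset.sum_comm]
    exact Finset.sum_congr rfl fun i _ => Finset.sum_congr rfl fun g _ => by ring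
  exact_mod_cast key

theorem FDRep.char_tensorUnit {G : Type} [Group G] (g : G) :
    (𝟙_ (FDRep ℂ G)).character g = 1 := by
  have h : (𝟙_ (FDRep ℂ G)).ρ g = LinearMap.id := rfl
  rw [FDRep.character, h]
  exact (LinearMap.trace_id ℂ ℂ).trans (by simp)

/-- **Lemma (r-step transition probabilities).**  Let `G` be a finite group, `rep` a complete
list of pairwise non-isomorphic irreducible complex representations of `G` (indexed by `ι`),
`triv` the index of the trivial representation, and `η` a finite-dimensional complex
representation of `G`.  For the tensor product Markov chain `K` associated with `η`, for
every `r ≥ 1` and every irreducible `ρ`, `K^r(𝟙, ρ) = d_ρ · m_ρ(η^{⊗r}) / d_η^r`. -/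
theorem rstep_transition_eq {G : Type} [Group G] [Fintype G]
    {ι : Type} [Fintype ι] [DecidableEq ι]
    (rep : ι → FDRep ℂ G)
    (hsimple : ∀ i, Simple (rep i))
    (hcomplete : ∀ V : FDRep ℂ G, Simple V → ∃ i, Nonempty (V ≅ rep i))
    (hinj : ∀ i j : ι, Nonempty (rep i ≅ rep j) → i = j)
    (triv : ι) (htriv : ∀ g : G, (rep triv).character g = 1)
    (η : FDRep ℂ G)
    (r : ℕ) (hr : 1 ≤ r) (ρ : ι) :
    (tensorChain rep η ^ r) triv ρ =
      (Module.finrank ℂ (rep ρ) * multIn (rep ρ) (tensorPow η r) : ℝ) /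
        (Module.finrank ℂ η : ℝ) ^ r := by
  clear hr
  have hmult_triv (i : ι) : multIn (rep i) (𝟙_ (FDRep ℂ G)) = if triv = i then 1 else 0 := by
    classical
    have h : (multIn (rep i) (𝟙_ (FDRep ℂ G)) : ℂ) = multIn (rep i) (rep triv) := by
      simp only [multIn_eq_sum_char, FDRep.char_tensorUnit, htriv]
    have := hsimple i
    have := hsimple triv
    rw [Nat.cast_inj.mp h, multIn, FDRep.finrank_hom_simple_simple]
    refine if_congr ⟨fun ⟨f⟩ => hinj triv i ⟨f.symm⟩, ?_⟩ rfl rfl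
    rintro rfl
    exact ⟨Iso.refl _⟩
  have hdim_triv : Module.finrank ℂ (rep triv) = 1 := by
    have h := htriv 1
    rw [FDRep.char_one] at h
    exact_mod_cast h
  induction r generalizing ρ with
  | zero =>
    rw [tensorPow, hmult_triv, pow_zero, Matrix.one_apply]
    split_ifs with h
    · subst h
      simp [hdim_triv]
    · simp
  | succ n ih =>
    rw [pow_succ, Matrix.mul_apply, tensorPow,
      multIn_tensorObj rep hsimple hcomplete hinj (tensorPow η n) η (rep ρ), Nat.cast_sum,
      Finset.mul_sum, Finset.sum_div]
    refine Finset.sum_congr rfl fun i _ => ?_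
    have := hsimple i
    have hdim : (Module.finrank ℂ (rep i) : ℝ) ≠ 0 :=
      Nat.cast_ne_zero.mpr (rep i).finrank_ne_zero_of_simple
    rw [ih i, tensorChain, div_mul_div_comm, Nat.cast_mul, pow_succ]
    refine Eq.trans ?_ (mul_div_mul_left _ _ hdim)
    congr 1 <;> ring
end
end

section
/- Let F be a finite field with q elements, let n ≥ 3, and let η be a complex representation of G = GL_n(F) whose character satisfies χ^η(g) = q^{dim ker(g−1)} for all g ∈ G (the Weil representation of GL_n(q)). Let K be the tensor product Markov chain on Irr(G) associated to η, started at the trivial representation 𝟙, and let π be the Plancherel measure. Then for every integer c with 1 ≤ c ≤ n−1 and r = n−c, one has ‖K^r_𝟙 − π‖_TV ≥ 1 − 11.25·q^{2−2c} − 18·q^{1−c}. In particular, for every ε > 0 there exists c > 0 depending only on ε such that ‖K^r_𝟙 − π‖_TV ≥ 1 − ε for r = n−c and all sufficiently large n. -/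
open CategoryTheory MonoidalCategory Finset

noncomputable section

/-- The dimension of the fixed space `ker(g−1)` of `g ∈ GL_m(F)` acting on `F^m`. -/
def fixdim {F : Type} [Field F] {m : ℕ} (g : (Matrix (Fin m) (Fin m) F)ˣ) : ℕ :=
  Module.finrank F (LinearMap.ker (Matrix.toLin' ((g : Matrix (Fin m) (Fin m) F) - 1)))

section Group

variable {G : Type} [Group G]

lemma character_eq_add_of_isCompl {V : Type} [AddCommGroup V] [Module ℂ V] [FiniteDimensional ℂ V]
    (ρ : Representation ℂ G V) (p q : Subrepresentation ρ)
    (h : IsCompl p.toSubmodule q.toSubmodule) (g : G) :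
    ρ.character g = p.toRepresentation.character g + q.toRepresentation.character g := by
  have e := LinearMap.trace_conj' (LinearMap.prodMap (p.toRepresentation g) (q.toRepresentation g))
    (Submodule.prodEquivOfIsCompl _ _ h)
  rw [LinearMap.trace_prodMap'] at e
  unfold Representation.character
  rw [← e]
  congr 1
  ext v
  obtain ⟨⟨a, b⟩, rfl⟩ := (Submodule.prodEquivOfIsCompl _ _ h).surjective v
  simp [LinearEquiv.conj_apply, Subrepresentation.toRepresentation]

lemma multIn_self_pos (V : FDRep ℂ G) [Nontrivial V] : 0 < multIn V V := by
  have : (𝟙 V : V ⟶ V) ≠ 0 := by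
    intro h
    obtain ⟨v, hv⟩ := exists_ne (0 : V)
    apply hv
    have := congrArg (fun f : V ⟶ V => f.hom.hom.hom v) h
    exact this
  rw [multIn]
  exact Module.finrank_pos_iff_exists_ne_zero.2 ⟨_, this⟩

lemma character_eq_zero_of_subsingleton (W : FDRep ℂ G) [Subsingleton W] (g : G) :
    W.character g = 0 := by
  simp [FDRep.character, Subsingleton.elim (W.ρ g) 0]

/-- The vectors of `V` fixed by the subgroup `H`. -/
abbrev fixedSubmodule (V : FDRep ℂ G) (H : Subgroup G) : Submodule ℂ V :=
  Representation.invariants (V.ρ.comp H.subtype)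

lemma mem_fixedSubmodule (V : FDRep ℂ G) (H : Subgroup G) (v : V) :
    v ∈ fixedSubmodule V H ↔ ∀ h ∈ H, V.ρ h v = v := by
  simp [fixedSubmodule, Representation.mem_invariants]

variable [Fintype G]

lemma exists_isCompl_subrepresentation {V : Type} [AddCommGroup V] [Module ℂ V]
    (ρ : Representation ℂ G V) (p : Subrepresentation ρ) :
    ∃ q : Subrepresentation ρ, IsCompl p.toSubmodule q.toSubmodule := by
  have : Representation.IsSemisimpleRepresentation ρ := inferInstance
  obtain ⟨q, hq⟩ := exists_isCompl p
  refine ⟨q, ?_⟩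
  constructor
  · rw [disjoint_iff]
    have := hq.inf_eq_bot
    exact congrArg Subrepresentation.toSubmodule this
  · rw [codisjoint_iff]
    have := hq.sup_eq_top
    exact congrArg Subrepresentation.toSubmodule this

lemma card_mul_multIn (V W : FDRep ℂ G) :
    ∑ g : G, W.character g * V.character g⁻¹ = Nat.card G * (multIn V W : ℂ) := by
  have hG : (Nat.card G : ℂ) ≠ 0 := by exact_mod_cast Nat.card_pos.ne'
  have := invertibleOfNonzero hG
  rw [multIn, ← FDRep.scalar_product_char_eq_finrank_equivariant, mul_inv_cancel_left₀ hG]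

lemma simple_of_isIrreducible (V : FDRep ℂ G) (h : Representation.IsIrreducible V.ρ) :
    Simple V := by
  have hG : (Nat.card G : ℂ) ≠ 0 := by exact_mod_cast Nat.card_pos.ne'
  have := invertibleOfNonzero hG
  rw [FDRep.simple_iff_char_is_norm_one]
  have := Representation.char_orthonormal V.ρ V.ρ
  rw [if_pos ⟨Representation.Equiv.refl _⟩, inv_mul_eq_one₀ hG] at this
  exact this.symm

lemma multIn_add_right (V : FDRep ℂ G) {W W₁ W₂ : FDRep ℂ G}
    (h : ∀ g, W.character g = W₁.character g + W₂.character g) :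
    multIn V W = multIn V W₁ + multIn V W₂ := by
  have hG : (Nat.card G : ℂ) ≠ 0 := by exact_mod_cast Nat.card_pos.ne'
  have := card_mul_multIn V W
  simp only [h, add_mul, Finset.sum_add_distrib, card_mul_multIn, ← mul_add] at this
  exact_mod_cast (mul_left_cancel₀ hG this).symm

lemma multIn_add_left {V V₁ V₂ : FDRep ℂ G} (W : FDRep ℂ G)
    (h : ∀ g, V.character g = V₁.character g + V₂.character g) :
    multIn V W = multIn V₁ W + multIn V₂ W := by
  have hG : (Nat.card G : ℂ) ≠ 0 := by exact_mod_cast Nat.card_pos.ne'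
  have := card_mul_multIn V W
  simp only [h, mul_add, Finset.sum_add_distrib, card_mul_multIn] at this
  rw [← mul_add] at this
  exact_mod_cast (mul_left_cancel₀ hG this).symm

lemma nontrivial_of_simple (V : FDRep ℂ G) [Simple V] : Nontrivial V := by
  by_contra h
  rw [not_nontrivial_iff_subsingleton] at h
  have h1 : multIn V V = 1 := finrank_endomorphism_simple_eq_one ℂ V
  have h2 := card_mul_multIn V V
  simp only [character_eq_zero_of_subsingleton, h1, zero_mul, Finset.sum_const_zero,
    Nat.cast_one, mul_one] at h2
  exact Nat.card_pos.ne' (by exact_mod_cast h2.symm)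

lemma isIrreducible_of_simple (V : FDRep ℂ G) [Simple V] : Representation.IsIrreducible V.ρ := by
  have h1 : multIn V V = 1 := finrank_endomorphism_simple_eq_one ℂ V
  have hnt := nontrivial_of_simple V
  refine { exists_pair_ne := ⟨⊥, ⊤, fun h => ?_⟩, eq_bot_or_eq_top := fun p => ?_ }
  · obtain ⟨v, hv⟩ := exists_ne (0 : V)
    have : v ∈ (⊥ : Submodule ℂ V) := by
      rw [show (⊥ : Submodule ℂ V) = ⊤ from congrArg Subrepresentation.toSubmodule h]; trivial
    exact hv (by simpa using this)
  · obtain ⟨q, hq⟩ := exists_isCompl_subrepresentation V.ρ p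
    by_contra! hp
    have hchar : ∀ g, V.character g = (FDRep.of p.toRepresentation).character g +
        (FDRep.of q.toRepresentation).character g := character_eq_add_of_isCompl V.ρ p q hq
    have hpn : Nontrivial p.toSubmodule := by
      rw [Submodule.nontrivial_iff_ne_bot]
      exact fun h => hp.1 (Subrepresentation.toSubmodule_injective h)
    have hqn : Nontrivial q.toSubmodule := by
      rw [Submodule.nontrivial_iff_ne_bot]
      intro h
      rw [h] at hq
      exact hp.2 (Subrepresentation.toSubmodule_injective ((sup_bot_eq _).symm.trans hq.sup_eq_top))
    have e1 := multIn_add_right V hchar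
    rw [h1, multIn_add_left (FDRep.of p.toRepresentation) hchar,
      multIn_add_left (FDRep.of q.toRepresentation) hchar] at e1
    have hp' : 0 < multIn (FDRep.of p.toRepresentation) (FDRep.of p.toRepresentation) :=
      @multIn_self_pos G _ (FDRep.of p.toRepresentation) hpn
    have hq' : 0 < multIn (FDRep.of q.toRepresentation) (FDRep.of q.toRepresentation) :=
      @multIn_self_pos G _ (FDRep.of q.toRepresentation) hqn
    omega

lemma multIn_congr {V W W' : FDRep ℂ G} (h : W.character = W'.character) :
    multIn V W = multIn V W' := by
  have hG : (Nat.card G : ℂ) ≠ 0 := by exact_mod_cast Nat.card_pos.ne'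
  have := card_mul_multIn V W
  rw [h, card_mul_multIn] at this
  exact_mod_cast (mul_left_cancel₀ hG this).symm

variable {ι : Type} [Fintype ι]

/-- The character of a representation is the sum of the irreducible characters, weighted by their
multiplicities. -/
lemma character_eq_sum_multIn_mul (rep : ι → FDRep ℂ G) (hsimple : ∀ i, Simple (rep i))
    (hcomplete : ∀ V : FDRep ℂ G, Simple V → ∃ i, Nonempty (V ≅ rep i))
    (hinj : ∀ i j : ι, Nonempty (rep i ≅ rep j) → i = j) (W : FDRep ℂ G) (g : G) :
    W.character g = ∑ i, (multIn (rep i) W : ℂ) * (rep i).character g := by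
  classical
  obtain ⟨m, hm⟩ : ∃ m, m = Module.finrank ℂ W := ⟨_, rfl⟩
  induction m using Nat.strong_induction_on generalizing W with
  | _ m ih =>
  subst hm
  rcases subsingleton_or_nontrivial W with hW | hW
  · have h0 := character_eq_zero_of_subsingleton W
    have h1 : ∀ i, multIn (rep i) W = 0 := fun i => by
      have hG : (Nat.card G : ℂ) ≠ 0 := by exact_mod_cast Nat.card_pos.ne'
      have := card_mul_multIn (rep i) W
      simp only [h0, zero_mul, Finset.sum_const_zero] at this
      exact_mod_cast (mul_eq_zero.1 this.symm).resolve_left hG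
    simp [h0, h1]
  by_cases hs : Simple W
  · obtain ⟨i, ⟨e⟩⟩ := hcomplete W hs
    have hmult : ∀ j, multIn (rep j) W = if j = i then 1 else 0 := fun j => by
      have := hsimple i
      have := hsimple j
      rw [multIn_congr (FDRep.char_iso e), multIn, FDRep.finrank_hom_simple_simple]
      refine if_congr ⟨hinj j i, ?_⟩ rfl rfl
      rintro rfl
      exact ⟨Iso.refl _⟩
    simp [hmult, FDRep.char_iso e]
  · have hirr : ¬ Representation.IsIrreducible W.ρ := fun h => hs (simple_of_isIrreducible W h)
    obtain ⟨p, hpb, hpt⟩ : ∃ p : Subrepresentation W.ρ, p.toSubmodule ≠ ⊥ ∧ p.toSubmodule ≠ ⊤ := by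
      by_contra! hcon
      refine hirr { exists_pair_ne := ⟨⊥, ⊤, fun h => ?_⟩, eq_bot_or_eq_top := fun p => ?_ }
      · exact bot_ne_top (congrArg Subrepresentation.toSubmodule h : (⊥ : Submodule ℂ W) = ⊤)
      · by_cases h : p.toSubmodule = ⊥
        · exact Or.inl (Subrepresentation.toSubmodule_injective h)
        · exact Or.inr (Subrepresentation.toSubmodule_injective (hcon p h))
    obtain ⟨q, hq⟩ := exists_isCompl_subrepresentation W.ρ p
    have hchar : ∀ g, W.character g = (FDRep.of p.toRepresentation).character g +
        (FDRep.of q.toRepresentation).character g := character_eq_add_of_isCompl W.ρ p q hq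
    have hdim := Submodule.finrank_add_eq_of_isCompl hq
    have hplt := Submodule.finrank_lt hpt
    have hppos : 0 < Module.finrank ℂ p.toSubmodule := by
      rwa [Nat.pos_iff_ne_zero, Ne, Submodule.finrank_eq_zero]
    rw [hchar, ih _ hplt (FDRep.of p.toRepresentation) rfl,
      ih (Module.finrank ℂ q.toSubmodule) (by omega) (FDRep.of q.toRepresentation) rfl,
      ← Finset.sum_add_distrib]
    refine Finset.sum_congr rfl fun i _ => ?_
    rw [multIn_add_right (rep i) hchar]
    push_cast
    ring

/-- The right regular representation of `G` on functions `G → ℂ`. -/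
def regularRep (G : Type) [Group G] : Representation ℂ G (G → ℂ) where
  toFun g := LinearMap.funLeft ℂ ℂ (· * g)
  map_one' := by ext; simp [LinearMap.funLeft]
  map_mul' x y := by
    refine LinearMap.ext fun f => funext fun z => ?_
    simp [LinearMap.funLeft, mul_assoc]

lemma character_regularRep [DecidableEq G] (g : G) :
    (FDRep.of (regularRep G)).character g = if g = 1 then (Fintype.card G : ℂ) else 0 := by
  change LinearMap.trace ℂ (G → ℂ) (regularRep G g) = _
  rw [LinearMap.trace_eq_matrix_trace ℂ (Pi.basisFun ℂ G)]
  simp only [Matrix.trace, Matrix.diag_apply, LinearMap.toMatrix_apply]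
  split_ifs with h
  · simp [h]
  · refine Finset.sum_eq_zero fun x _ => ?_
    simp [regularRep, LinearMap.funLeft, h]

lemma sum_finrank_mul_character [DecidableEq G] (rep : ι → FDRep ℂ G)
    (hsimple : ∀ i, Simple (rep i))
    (hcomplete : ∀ V : FDRep ℂ G, Simple V → ∃ i, Nonempty (V ≅ rep i))
    (hinj : ∀ i j : ι, Nonempty (rep i ≅ rep j) → i = j) (g : G) :
    ∑ i, (Module.finrank ℂ (rep i) : ℂ) * (rep i).character g =
      if g = 1 then (Fintype.card G : ℂ) else 0 := by
  rw [← character_regularRep, character_eq_sum_multIn_mul rep hsimple hcomplete hinj]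
  refine Finset.sum_congr rfl fun i _ => ?_
  congr 1
  have hG : (Nat.card G : ℂ) ≠ 0 := by exact_mod_cast Nat.card_pos.ne'
  have := card_mul_multIn (rep i) (FDRep.of (regularRep G))
  simp only [character_regularRep, ite_mul, zero_mul, Finset.sum_ite_eq', Finset.mem_univ, if_true,
    inv_one, FDRep.char_one, Nat.card_eq_fintype_card] at this hG
  exact mul_left_cancel₀ hG this

lemma sum_plancherel (rep : ι → FDRep ℂ G) (hsimple : ∀ i, Simple (rep i))
    (hcomplete : ∀ V : FDRep ℂ G, Simple V → ∃ i, Nonempty (V ≅ rep i))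
    (hinj : ∀ i j : ι, Nonempty (rep i ≅ rep j) → i = j) :
    ∑ i, plancherel rep i = 1 := by
  classical
  have h := sum_finrank_mul_character rep hsimple hcomplete hinj 1
  simp only [FDRep.char_one, if_true] at h
  have h' : ∑ i, (Module.finrank ℂ (rep i) : ℝ) ^ 2 = Fintype.card G := by
    simp only [pow_two]
    exact_mod_cast h
  simp only [plancherel]
  rw [← Finset.sum_div, h', div_self (by exact_mod_cast Fintype.card_ne_zero)]

/-- The `k`-step distribution of the tensor product chain in terms of a representation whose
character is the `k`-th power of that of `η`. -/
lemma exists_tensorChain_pow_eq [DecidableEq ι] (rep : ι → FDRep ℂ G)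
    (hsimple : ∀ i, Simple (rep i))
    (hcomplete : ∀ V : FDRep ℂ G, Simple V → ∃ i, Nonempty (V ≅ rep i))
    (hinj : ∀ i j : ι, Nonempty (rep i ≅ rep j) → i = j)
    (triv : ι) (htriv : ∀ g : G, (rep triv).character g = 1) (η : FDRep ℂ G) (k : ℕ) :
    ∃ W : FDRep ℂ G, W.character = η.character ^ k ∧ ∀ i, (tensorChain rep η ^ k) triv i =
      Module.finrank ℂ (rep i) * multIn (rep i) W / (Module.finrank ℂ η : ℝ) ^ k := by
  have hG : (Nat.card G : ℂ) ≠ 0 := by exact_mod_cast Nat.card_pos.ne'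
  have hd : ∀ i, (Module.finrank ℂ (rep i) : ℝ) ≠ 0 := fun i => by
    have := hsimple i
    have := nontrivial_of_simple (rep i)
    exact_mod_cast (Module.finrank_pos (R := ℂ) (M := rep i)).ne'
  induction k with
  | zero =>
    refine ⟨rep triv, funext htriv, fun i => ?_⟩
    have := hsimple i
    have := hsimple triv
    rw [multIn, FDRep.finrank_hom_simple_simple, pow_zero, pow_zero, div_one, Matrix.one_apply]
    split_ifs with h1 h2 h2
    · subst h1
      have := htriv 1
      rw [FDRep.char_one] at this
      have : (Module.finrank ℂ (rep triv) : ℝ) = 1 := by exact_mod_cast this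
      simp [this]
    · exact absurd ⟨Iso.refl _⟩ (h1 ▸ h2)
    · exact absurd (hinj _ _ h2).symm h1
    · simp
  | succ k ih =>
    obtain ⟨W, hW, hK⟩ := ih
    refine ⟨W ⊗ η, by rw [FDRep.char_tensor, hW, pow_succ], fun i => ?_⟩
    rw [pow_succ, Matrix.mul_apply]
    have key : (multIn (rep i) (W ⊗ η) : ℝ) =
        ∑ j, (multIn (rep j) W : ℝ) * multIn (rep i) (rep j ⊗ η) := by
      have : (multIn (rep i) (W ⊗ η) : ℂ) =
          ∑ j, (multIn (rep j) W : ℂ) * multIn (rep i) (rep j ⊗ η) := by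
        apply mul_left_cancel₀ hG
        rw [← card_mul_multIn, Finset.mul_sum]
        simp only [mul_left_comm (Nat.card G : ℂ), ← card_mul_multIn, FDRep.char_tensor,
          Pi.mul_apply, Finset.mul_sum]
        rw [Finset.sum_comm]
        refine Finset.sum_congr rfl fun g _ => ?_
        rw [character_eq_sum_multIn_mul rep hsimple hcomplete hinj W, Finset.sum_mul,
          Finset.sum_mul]
        exact Finset.sum_congr rfl fun j _ => by ring
      exact_mod_cast this
    rw [key, Finset.mul_sum, Finset.sum_div]
    refine Finset.sum_congr rfl fun j _ => ?_
    rw [hK, tensorChain, pow_succ, div_mul_div_comm]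
    by_cases hη : (Module.finrank ℂ η : ℝ) = 0
    · simp [hη]
    have := hd j
    field_simp

lemma sum_tensorChain_pow [DecidableEq ι] (rep : ι → FDRep ℂ G)
    (hsimple : ∀ i, Simple (rep i))
    (hcomplete : ∀ V : FDRep ℂ G, Simple V → ∃ i, Nonempty (V ≅ rep i))
    (hinj : ∀ i j : ι, Nonempty (rep i ≅ rep j) → i = j)
    (triv : ι) (htriv : ∀ g : G, (rep triv).character g = 1) (η : FDRep ℂ G) [Nontrivial η]
    (k : ℕ) : ∑ i, (tensorChain rep η ^ k) triv i = 1 := by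
  obtain ⟨W, hW, hK⟩ := exists_tensorChain_pow_eq rep hsimple hcomplete hinj triv htriv η k
  have hη : (Module.finrank ℂ η : ℝ) ≠ 0 := by exact_mod_cast Module.finrank_pos.ne'
  have h := character_eq_sum_multIn_mul rep hsimple hcomplete hinj W 1
  rw [hW] at h
  simp only [Pi.pow_apply, FDRep.char_one] at h
  have h' : (Module.finrank ℂ η : ℝ) ^ k =
      ∑ i, (multIn (rep i) W : ℝ) * Module.finrank ℂ (rep i) := by exact_mod_cast h
  simp only [hK, mul_comm (Module.finrank ℂ (rep _) : ℝ)]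
  rw [← Finset.sum_div, ← h', div_self (pow_ne_zero _ hη)]

lemma one_sub_sum_le_tvDist (P Q : ι → ℝ) (hP : ∑ i, P i = 1) (hQ : ∑ i, Q i = 1)
    (s : Finset ι) (hs : ∀ i, P i ≠ 0 → i ∈ s) :
    1 - ∑ i ∈ s, Q i ≤ tvDist P Q := by
  classical
  have hP' : ∑ i ∈ s, P i = 1 := by
    rw [← hP]
    exact Finset.sum_subset (Finset.subset_univ s) fun i _ hi => by
      by_contra h
      exact hi (hs i h)
  have h1 : ∑ i ∈ s, (P i - Q i) ≤ ∑ i ∈ s, |P i - Q i| :=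
    Finset.sum_le_sum fun i _ => le_abs_self _
  have h2 : ∑ i ∈ sᶜ, (Q i - P i) ≤ ∑ i ∈ sᶜ, |P i - Q i| :=
    Finset.sum_le_sum fun i _ => by rw [abs_sub_comm]; exact le_abs_self _
  rw [Finset.sum_sub_distrib] at h1 h2
  have h3 := Finset.sum_add_sum_compl s P
  have h4 := Finset.sum_add_sum_compl s Q
  have h5 := Finset.sum_add_sum_compl s fun i => |P i - Q i|
  rw [tvDist]
  linarith

lemma sum_character_subgroup (V : FDRep ℂ G) (H : Subgroup G) [Fintype H] :
    ∑ h : H, V.character h = Nat.card H * (Module.finrank ℂ (fixedSubmodule V H) : ℂ) := by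
  have hH : (Nat.card H : ℂ) ≠ 0 := by exact_mod_cast Nat.card_pos.ne'
  have := invertibleOfNonzero hH
  have h := Representation.card_inv_mul_sum_char_eq_finrank
    (V.ρ.comp H.subtype : Representation ℂ H V)
  rw [← h, mul_inv_cancel_left₀ hH]
  rfl

lemma sum_finrank_mul_finrank_fixedSubmodule (rep : ι → FDRep ℂ G)
    (hsimple : ∀ i, Simple (rep i))
    (hcomplete : ∀ V : FDRep ℂ G, Simple V → ∃ i, Nonempty (V ≅ rep i))
    (hinj : ∀ i j : ι, Nonempty (rep i ≅ rep j) → i = j) (H : Subgroup G) :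
    ∑ i, (Module.finrank ℂ (rep i) : ℝ) * Module.finrank ℂ (fixedSubmodule (rep i) H) =
      Fintype.card G / Nat.card H := by
  classical
  have hH : (Nat.card H : ℂ) ≠ 0 := by exact_mod_cast Nat.card_pos.ne'
  have hH' : (Nat.card H : ℝ) ≠ 0 := by exact_mod_cast Nat.card_pos.ne'
  have h : (Nat.card H : ℂ) * ∑ i, (Module.finrank ℂ (rep i) : ℂ) *
      Module.finrank ℂ (fixedSubmodule (rep i) H) = Fintype.card G := by
    simp only [Finset.mul_sum, mul_left_comm (Nat.card H : ℂ), ← sum_character_subgroup]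
    rw [Finset.sum_comm]
    simp only [sum_finrank_mul_character rep hsimple hcomplete hinj]
    simp
  rw [eq_div_iff hH', mul_comm]
  exact_mod_cast h

lemma finrank_iSup_le_sum {κ V : Type*} [Fintype κ] [AddCommGroup V] [Module ℂ V]
    [FiniteDimensional ℂ V] (p : κ → Submodule ℂ V) :
    Module.finrank ℂ (⨆ w, p w : Submodule ℂ V) ≤ ∑ w, Module.finrank ℂ (p w) := by
  classical
  rw [← Finset.sup_univ_eq_iSup]
  induction (Finset.univ : Finset κ) using Finset.induction_on with
  | empty => simp
  | insert a s ha ih =>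
    rw [Finset.sup_insert, Finset.sum_insert ha]
    exact (Submodule.finrank_add_le_finrank_add_finrank _ _).trans (by gcongr)

lemma finrank_le_sum_finrank_fixedSubmodule {κ : Type*} [Fintype κ] (H : κ → Subgroup G)
    (hconj : ∀ w g, ∃ w', ∀ h ∈ H w', g⁻¹ * h * g ∈ H w) (V : FDRep ℂ G) [Simple V] {w : κ}
    (hw : fixedSubmodule V (H w) ≠ ⊥) :
    Module.finrank ℂ V ≤ ∑ w, Module.finrank ℂ (fixedSubmodule V (H w)) := by
  have hirr := isIrreducible_of_simple V
  let p : Subrepresentation V.ρ :=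
    { toSubmodule := ⨆ w, fixedSubmodule V (H w)
      apply_mem_toSubmodule := fun g v hv => by
        induction hv using Submodule.iSup_induction' with
        | mem w x hx =>
          obtain ⟨w', hw'⟩ := hconj w g
          refine Submodule.mem_iSup_of_mem w' ?_
          rw [mem_fixedSubmodule] at hx ⊢
          intro h hh
          have e := hx _ (hw' h hh)
          have hmul : h * g = g * (g⁻¹ * h * g) := by group
          rw [← Module.End.mul_apply, ← map_mul, hmul, map_mul, Module.End.mul_apply, e]
        | zero => simp
        | add x y _ _ hx hy => rw [map_add]; exact Submodule.add_mem _ hx hy }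
  have htop : p.toSubmodule = ⊤ := by
    rcases hirr.eq_bot_or_eq_top p with h | h
    · exfalso
      have hb : (⨆ w, fixedSubmodule V (H w)) = ⊥ := congrArg Subrepresentation.toSubmodule h
      exact hw (le_bot_iff.1 (hb ▸ le_iSup (fun w => fixedSubmodule V (H w)) w))
    · exact congrArg Subrepresentation.toSubmodule h
  calc Module.finrank ℂ V = Module.finrank ℂ p.toSubmodule := by rw [htop, finrank_top]
    _ ≤ _ := finrank_iSup_le_sum _

/-- If every irreducible representation charged by the chain after `k` steps has a nonzero vector
fixed by a member of a conjugation-stable family of subgroups, then the chain is far from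
the Plancherel measure. -/
lemma one_sub_sum_inv_card_le_tvDist [DecidableEq ι] (rep : ι → FDRep ℂ G)
    (hsimple : ∀ i, Simple (rep i))
    (hcomplete : ∀ V : FDRep ℂ G, Simple V → ∃ i, Nonempty (V ≅ rep i))
    (hinj : ∀ i j : ι, Nonempty (rep i ≅ rep j) → i = j)
    (triv : ι) (htriv : ∀ g : G, (rep triv).character g = 1) (η : FDRep ℂ G) [Nontrivial η]
    (k : ℕ) {κ : Type*} [Fintype κ] (H : κ → Subgroup G)
    (hconj : ∀ w g, ∃ w', ∀ h ∈ H w', g⁻¹ * h * g ∈ H w)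
    (hfix : ∀ V : FDRep ℂ G, ∑ g : G, η.character g ^ k * V.character g⁻¹ ≠ 0 →
      ∃ w, fixedSubmodule V (H w) ≠ ⊥) :
    1 - ∑ w, (Nat.card (H w) : ℝ)⁻¹ ≤
      tvDist (fun i => (tensorChain rep η ^ k) triv i) (plancherel rep) := by
  classical
  obtain ⟨W, hW, hK⟩ := exists_tensorChain_pow_eq rep hsimple hcomplete hinj triv htriv η k
  have hG : (0 : ℝ) < Fintype.card G := by exact_mod_cast Fintype.card_pos
  set s : Finset ι := {i | ∃ w, fixedSubmodule (rep i) (H w) ≠ ⊥}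
  refine le_trans ?_ (one_sub_sum_le_tvDist _ _
    (sum_tensorChain_pow rep hsimple hcomplete hinj triv htriv η k)
    (sum_plancherel rep hsimple hcomplete hinj)
    s fun i hi => ?_)
  · refine sub_le_sub_left ?_ 1
    calc ∑ i ∈ s, plancherel rep i
        ≤ ∑ i ∈ s, ∑ w, (Module.finrank ℂ (rep i) : ℝ) *
            Module.finrank ℂ (fixedSubmodule (rep i) (H w)) / Fintype.card G := by
          refine Finset.sum_le_sum fun i hi => ?_
          obtain ⟨w, hw⟩ := (Finset.mem_filter.1 hi).2
          have := hsimple i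
          have hle := finrank_le_sum_finrank_fixedSubmodule H hconj (rep i) hw
          rw [plancherel, ← Finset.sum_div, ← Finset.mul_sum, pow_two]
          gcongr
          exact_mod_cast hle
      _ ≤ ∑ i, ∑ w, (Module.finrank ℂ (rep i) : ℝ) *
            Module.finrank ℂ (fixedSubmodule (rep i) (H w)) / Fintype.card G :=
          Finset.sum_le_sum_of_subset_of_nonneg (Finset.subset_univ s)
            fun i _ _ => Finset.sum_nonneg fun w _ => by positivity
      _ = ∑ w, (Nat.card (H w) : ℝ)⁻¹ := by
          rw [Finset.sum_comm]
          refine Finset.sum_congr rfl fun w _ => ?_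
          rw [← Finset.sum_div,
            sum_finrank_mul_finrank_fixedSubmodule rep hsimple hcomplete hinj, div_div_cancel_left']
          exact hG.ne'
  · refine Finset.mem_filter.2 ⟨Finset.mem_univ i, hfix (rep i) ?_⟩
    have h0 : multIn (rep i) W ≠ 0 := fun h => hi (by simp [hK, h])
    have := card_mul_multIn (rep i) W
    rw [hW] at this
    simp only [Pi.pow_apply] at this
    rw [this]
    exact_mod_cast mul_ne_zero Nat.card_pos.ne' h0

end Group

section GeneralLinear

variable {F : Type} [Field F]

lemma exists_le_finrank_eq {V : Type*} [AddCommGroup V] [Module F V] [FiniteDimensional F V]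
    (U : Submodule F V) {k : ℕ} (hU : Module.finrank F U ≤ k) (hk : k ≤ Module.finrank F V) :
    ∃ W : Submodule F V, U ≤ W ∧ Module.finrank F W = k := by
  induction k, hU using Nat.le_induction with
  | base => exact ⟨U, le_rfl, rfl⟩
  | succ k _ ih =>
    obtain ⟨W, hUW, hW⟩ := ih (by omega)
    obtain ⟨v, hv⟩ : ∃ v, v ∉ W := by
      by_contra! h
      rw [(Submodule.eq_top_iff'.2 h : W = ⊤), finrank_top] at hW
      omega
    have hlt : W < W ⊔ Submodule.span F {v} :=
      lt_of_le_of_ne le_sup_left fun h => hv <| by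
        rw [h]
        exact Submodule.mem_sup_right (Submodule.mem_span_singleton_self v)
    refine ⟨W ⊔ Submodule.span F {v}, hUW.trans le_sup_left, ?_⟩
    have h1 := Submodule.finrank_lt_finrank_of_lt hlt
    have h2 := Submodule.finrank_add_le_finrank_add_finrank W (Submodule.span F {v})
    have h3 := finrank_span_le_card (R := F) ({v} : Set V)
    simp only [Set.toFinset_singleton, Finset.card_singleton] at h3
    omega

/-- The subgroup of `GL_n(F)` fixing every vector of `W`. -/
def pointwiseFixer {n : ℕ} (W : Submodule F (Fin n → F)) :
    Subgroup (Matrix (Fin n) (Fin n) F)ˣ where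
  carrier := {g | ∀ w ∈ W, (g : Matrix (Fin n) (Fin n) F).mulVec w = w}
  one_mem' := by simp
  mul_mem' {a b} ha hb w hw := by
    rw [Units.val_mul, ← Matrix.mulVec_mulVec, hb w hw, ha w hw]
  inv_mem' {a} ha w hw := by
    conv_lhs => rw [← ha w hw]
    rw [Matrix.mulVec_mulVec, ← Units.val_mul, inv_mul_cancel, Units.val_one, Matrix.one_mulVec]

lemma mem_pointwiseFixer {n : ℕ} {W : Submodule F (Fin n → F)}
    {g : (Matrix (Fin n) (Fin n) F)ˣ} :
    g ∈ pointwiseFixer W ↔ ∀ w ∈ W, (g : Matrix (Fin n) (Fin n) F).mulVec w = w := Iff.rfl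

lemma exists_conj_mem_pointwiseFixer {n : ℕ} (W : Submodule F (Fin n → F))
    (g : (Matrix (Fin n) (Fin n) F)ˣ) :
    ∃ W' : Submodule F (Fin n → F), Module.finrank F W' = Module.finrank F W ∧
      ∀ h ∈ pointwiseFixer W', g⁻¹ * h * g ∈ pointwiseFixer W := by
  have hinj : Function.Injective (Matrix.toLin' (g : Matrix (Fin n) (Fin n) F)) :=
    Matrix.mulVec_injective_of_isUnit g.isUnit
  refine ⟨W.map (Matrix.toLin' (g : Matrix (Fin n) (Fin n) F)),
    (Submodule.equivMapOfInjective _ hinj W).finrank_eq.symm, fun h hh w hw => ?_⟩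
  have e : (h : Matrix (Fin n) (Fin n) F).mulVec ((g : Matrix (Fin n) (Fin n) F).mulVec w) =
      (g : Matrix (Fin n) (Fin n) F).mulVec w := hh _ ⟨w, hw, by simp⟩
  rw [Units.val_mul, Units.val_mul, ← Matrix.mulVec_mulVec, ← Matrix.mulVec_mulVec, e,
    Matrix.mulVec_mulVec, ← Units.val_mul, inv_mul_cancel, Units.val_one, Matrix.one_mulVec]

lemma exists_surjective_ker_eq {n c : ℕ} (hc : c ≤ n) (W : Submodule F (Fin n → F))
    (hW : Module.finrank F W = n - c) :
    ∃ Y : (Fin n → F) →ₗ[F] (Fin c → F), Function.Surjective Y ∧ LinearMap.ker Y = W := by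
  have h := Submodule.finrank_quotient_add_finrank W
  rw [hW, Module.finrank_fin_fun] at h
  have e : ((Fin n → F) ⧸ W) ≃ₗ[F] (Fin c → F) :=
    LinearEquiv.ofFinrankEq _ _ (by rw [Module.finrank_fin_fun]; omega)
  refine ⟨e.toLinearMap ∘ₗ W.mkQ, e.surjective.comp W.mkQ_surjective, ?_⟩
  rw [LinearEquiv.ker_comp, Submodule.ker_mkQ]

variable [Fintype F]

lemma card_subspaces_mul_card_GL_le {n c : ℕ} (hc : c ≤ n) :
    Nat.card {W : Submodule F (Fin n → F) // Module.finrank F W = n - c} *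
      Nat.card (GL (Fin c) F) ≤ Fintype.card F ^ (n * c) := by
  choose Y hY hker using fun W : {W : Submodule F (Fin n → F) // Module.finrank F W = n - c} =>
    exists_surjective_ker_eq hc W.1 W.2
  have hlin : Finite ((Fin n → F) →ₗ[F] (Fin c → F)) := Module.finite_of_finite F
  have hcard : Nat.card ((Fin n → F) →ₗ[F] (Fin c → F)) = Fintype.card F ^ (n * c) := by
    rw [Module.natCard_eq_pow_finrank (K := F), Module.finrank_linearMap]
    simp
  rw [← hcard, ← Nat.card_prod]
  refine Nat.card_le_card_of_injective
    (fun x => Matrix.toLin' (x.2 : Matrix (Fin c) (Fin c) F) ∘ₗ Y x.1) ?_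
  rintro ⟨W, A⟩ ⟨W', A'⟩ h
  have hA : ∀ B : GL (Fin c) F, LinearMap.ker (Matrix.toLin' (B : Matrix (Fin c) (Fin c) F)) = ⊥ :=
    fun B => LinearMap.ker_eq_bot.2 (Matrix.mulVec_injective_of_isUnit B.isUnit)
  have hWW : W = W' := by
    have := congrArg LinearMap.ker h
    simp only [LinearMap.ker_comp_of_ker_eq_bot _ (hA _), hker] at this
    exact Subtype.ext this
  subst hWW
  have := (LinearMap.cancel_right (hY W)).1 h
  exact Prod.ext rfl (Units.ext (Matrix.toLin'.injective this))

lemma mul_card_GL_le_card_pointwiseFixer {n c : ℕ} (hc : c ≤ n) (W : Submodule F (Fin n → F))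
    (hW : Module.finrank F W = n - c) :
    Fintype.card F ^ (c * (n - c)) * Nat.card (GL (Fin c) F) ≤ Nat.card (pointwiseFixer W) := by
  obtain ⟨Y, hY, hker⟩ := exists_surjective_ker_eq hc W hW
  obtain ⟨s, hs⟩ := Y.exists_rightInverse_of_surjective (LinearMap.range_eq_top.2 hY)
  have hlin : Finite ((Fin c → F) →ₗ[F] W) := Module.finite_of_finite F
  have hcard : Nat.card ((Fin c → F) →ₗ[F] W) = Fintype.card F ^ (c * (n - c)) := by
    rw [Module.natCard_eq_pow_finrank (K := F), Module.finrank_linearMap]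
    simp [hW]
  let f : ((Fin c → F) →ₗ[F] W) × GL (Fin c) F → ((Fin n → F) →ₗ[F] (Fin n → F)) := fun x =>
    LinearMap.id + (s ∘ₗ (Matrix.toLin' (x.2 : Matrix (Fin c) (Fin c) F) - LinearMap.id) +
      W.subtype ∘ₗ x.1) ∘ₗ Y
  have hYW : ∀ w : W, Y w = 0 := fun w => by
    rw [← LinearMap.mem_ker, hker]
    exact w.2
  have hYs : ∀ v, Y (s v) = v := fun v => LinearMap.congr_fun hs v
  have hYf : ∀ x v, Y (f x v) = (x.2 : Matrix (Fin c) (Fin c) F).mulVec (Y v) := fun x v => by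
    simp [f, hYW, hYs]
  have hfix : ∀ x, ∀ v, Y v = 0 → f x v = v := fun x v hv => by simp [f, hv]
  have hunit : ∀ x, IsUnit (f x) := fun x => by
    rw [LinearMap.isUnit_iff_ker_eq_bot, LinearMap.ker_eq_bot']
    intro v hv
    have h0 : Y v = 0 := by
      apply Matrix.mulVec_injective_of_isUnit x.2.isUnit
      rw [← hYf, hv, map_zero, Matrix.mulVec_zero]
    rw [← hfix x v h0, hv]
  choose u hu using fun x => (hunit x).map (LinearMap.toMatrixAlgEquiv' (R := F) (n := Fin n))
  have huv : ∀ x v, (u x : Matrix (Fin n) (Fin n) F).mulVec v = f x v := fun x v => by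
    rw [hu]
    exact LinearMap.toMatrix'_mulVec (f x) v
  rw [← hcard, ← Nat.card_prod]
  refine Nat.card_le_card_of_injective (fun x => (⟨u x, fun w hw => ?_⟩ : pointwiseFixer W)) ?_
  · rw [huv, hfix x w (hYW ⟨w, hw⟩)]
  · intro x y hxy
    have hxy' : ∀ v, f x v = f y v := fun v => by
      rw [← huv, ← huv, show u x = u y from congrArg Subtype.val hxy]
    have h2 : x.2 = y.2 := by
      refine Units.ext (Matrix.toLin'.injective (LinearMap.ext fun z => ?_))
      have := congrArg Y (hxy' (s z))
      simpa only [hYf, hYs, Matrix.toLin'_apply] using this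
    refine Prod.ext (LinearMap.ext fun z => Subtype.ext ?_) h2
    have := hxy' (s z)
    simpa [f, hYs, h2] using this

lemma pow_le_two_pow_mul_card_GL (c : ℕ) :
    Fintype.card F ^ (c * c) ≤ 2 ^ c * Nat.card (GL (Fin c) F) := by
  have hq : 2 ≤ Fintype.card F := Fintype.one_lt_card
  rw [Matrix.card_GL_field, pow_mul]
  calc (Fintype.card F ^ c) ^ c = ∏ _i : Fin c, Fintype.card F ^ c := by simp
    _ ≤ ∏ i : Fin c, 2 * (Fintype.card F ^ c - Fintype.card F ^ (i : ℕ)) := by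
        refine Finset.prod_le_prod' fun i _ => ?_
        have h1 : Fintype.card F ^ (i + 1 : ℕ) ≤ Fintype.card F ^ c :=
          Nat.pow_le_pow_right (by omega) i.2
        have h2 : 2 * Fintype.card F ^ (i : ℕ) ≤ Fintype.card F ^ (i + 1 : ℕ) := by
          rw [pow_succ, mul_comm]
          gcongr
        omega
    _ = _ := by simp [Finset.prod_mul_distrib]

lemma sum_inv_card_pointwiseFixer_le {n c : ℕ} (hc : c ≤ n)
    [Fintype {W : Submodule F (Fin n → F) // Module.finrank F W = n - c}] :
    ∑ W : {W : Submodule F (Fin n → F) // Module.finrank F W = n - c},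
      (Nat.card (pointwiseFixer W.1) : ℝ)⁻¹ ≤ 4 ^ c / (Fintype.card F : ℝ) ^ (c * c) := by
  have hq : (0 : ℝ) < Fintype.card F := by exact_mod_cast Fintype.card_pos
  have hg : (0 : ℝ) < Nat.card (GL (Fin c) F) := by exact_mod_cast Nat.card_pos
  have h1 : (Nat.card {W : Submodule F (Fin n → F) // Module.finrank F W = n - c} : ℝ) *
      Nat.card (GL (Fin c) F) ≤ (Fintype.card F : ℝ) ^ (n * c) := by
    exact_mod_cast card_subspaces_mul_card_GL_le (F := F) hc
  have h2 : (Fintype.card F : ℝ) ^ (c * c) ≤ 2 ^ c * Nat.card (GL (Fin c) F) := by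
    exact_mod_cast pow_le_two_pow_mul_card_GL (F := F) c
  have hexp : (Fintype.card F : ℝ) ^ (n * c) =
      (Fintype.card F : ℝ) ^ (c * (n - c)) * (Fintype.card F : ℝ) ^ (c * c) := by
    rw [← pow_add, ← mul_add, Nat.sub_add_cancel hc, mul_comm]
  have h3 : ∀ W : {W : Submodule F (Fin n → F) // Module.finrank F W = n - c},
      (Fintype.card F : ℝ) ^ (c * (n - c)) * Nat.card (GL (Fin c) F) ≤
        Nat.card (pointwiseFixer W.1) := fun W => by
    exact_mod_cast mul_card_GL_le_card_pointwiseFixer hc W.1 W.2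
  set Q : ℝ := (Fintype.card F : ℝ) ^ (c * (n - c))
  set R : ℝ := (Fintype.card F : ℝ) ^ (c * c)
  set g : ℝ := (Nat.card (GL (Fin c) F) : ℝ)
  have hQ : 0 < Q := by positivity
  have hR : 0 < R := by positivity
  calc ∑ W : {W : Submodule F (Fin n → F) // Module.finrank F W = n - c},
        (Nat.card (pointwiseFixer W.1) : ℝ)⁻¹
      ≤ ∑ _W : {W : Submodule F (Fin n → F) // Module.finrank F W = n - c}, (Q * g)⁻¹ := by
        exact Finset.sum_le_sum fun W _ => inv_anti₀ (by positivity) (h3 W)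
    _ = Nat.card {W : Submodule F (Fin n → F) // Module.finrank F W = n - c} * g /
          (Q * g ^ 2) := by
        rw [Finset.sum_const, nsmul_eq_mul, Finset.card_univ, Nat.card_eq_fintype_card]
        field_simp
    _ ≤ Q * R / (Q * g ^ 2) :=
        div_le_div_of_nonneg_right (h1.trans hexp.le) (by positivity)
    _ = R / g ^ 2 := by field_simp
    _ ≤ 4 ^ c / R := by
        rw [div_le_div_iff₀ (by positivity) hR, ← pow_two]
        calc R ^ 2 ≤ (2 ^ c * g) ^ 2 := by gcongr
          _ = 4 ^ c * g ^ 2 := by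
            rw [mul_pow, ← pow_mul, mul_comm c, pow_mul]
            norm_num

lemma four_pow_div_pow_le {x : ℝ} (hx : 2 ≤ x) {c : ℕ} (hc : 1 ≤ c) :
    4 ^ c / x ^ (c * c) ≤ 18 * x ^ (1 - (c : ℤ)) := by
  have hx0 : 0 < x := by linarith
  obtain ⟨d, rfl⟩ : ∃ d, c = d + 1 := ⟨c - 1, by omega⟩
  have hz : x ^ (1 - ((d + 1 : ℕ) : ℤ)) = (x ^ d)⁻¹ := by
    rw [show (1 - ((d + 1 : ℕ) : ℤ)) = -(d : ℤ) by push_cast; ring, zpow_neg, zpow_natCast]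
  rw [hz, ← div_eq_mul_inv, div_le_div_iff₀ (by positivity) (by positivity)]
  rcases Nat.lt_or_ge d 2 with hd | hd
  · have hpow : x ^ d ≤ x ^ ((d + 1) * (d + 1)) := pow_le_pow_right₀ (by linarith) (by nlinarith)
    have h4 : (4 : ℝ) ^ (d + 1) ≤ 18 := by interval_cases d <;> norm_num
    gcongr
  · calc (4 : ℝ) ^ (d + 1) * x ^ d ≤ (x ^ 2) ^ (d + 1) * x ^ d := by
          gcongr
          nlinarith
      _ = x ^ (2 * (d + 1) + d) := by rw [← pow_mul, ← pow_add]
      _ ≤ x ^ ((d + 1) * (d + 1)) := pow_le_pow_right₀ (by linarith) (by nlinarith)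
      _ ≤ 18 * x ^ ((d + 1) * (d + 1)) := by
          have : 0 < x ^ ((d + 1) * (d + 1)) := by positivity
          linarith

open scoped Classical in
lemma card_pow_fixdim_pow {n : ℕ} (g : (Matrix (Fin n) (Fin n) F)ˣ) (k : ℕ) :
    (Fintype.card F ^ fixdim g) ^ k = Fintype.card {X : Fin k → Fin n → F //
      g ∈ pointwiseFixer (Submodule.span F (Set.range X))} := by
  set K := LinearMap.ker (Matrix.toLin' ((g : Matrix (Fin n) (Fin n) F) - 1)) with hK
  have hmem : ∀ v, v ∈ K ↔ (g : Matrix (Fin n) (Fin n) F).mulVec v = v := fun v => by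
    simp [hK, sub_eq_zero]
  have hX : ∀ X : Fin k → Fin n → F, g ∈ pointwiseFixer (Submodule.span F (Set.range X)) ↔
      ∀ j, X j ∈ K := fun X => by
    have : g ∈ pointwiseFixer (Submodule.span F (Set.range X)) ↔
        Submodule.span F (Set.range X) ≤ K := by
      simp only [mem_pointwiseFixer, SetLike.le_def, hmem]
    rw [this, Submodule.span_le, Set.range_subset_iff]
    rfl
  have e : {X : Fin k → Fin n → F // g ∈ pointwiseFixer (Submodule.span F (Set.range X))} ≃
      (Fin k → K) :=
    (Equiv.subtypeEquivRight hX).trans Equiv.subtypePiEquivPi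
  rw [Fintype.card_congr e, Fintype.card_fun, Fintype.card_fin,
    Module.card_eq_pow_finrank (K := F) (V := K), fixdim]

/-- A representation occurring in the `k`-th power of the Weil character has a nonzero vector fixed
by the pointwise fixer of a `k`-dimensional subspace. -/
lemma exists_fixedSubmodule_pointwiseFixer_ne_bot [DecidableEq F] {n k : ℕ} (hk : k ≤ n)
    (V : FDRep ℂ (Matrix (Fin n) (Fin n) F)ˣ)
    (hV : ∑ g : (Matrix (Fin n) (Fin n) F)ˣ,
      ((Fintype.card F : ℂ) ^ fixdim g) ^ k * V.character g⁻¹ ≠ 0) :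
    ∃ W : {W : Submodule F (Fin n → F) // Module.finrank F W = k},
      fixedSubmodule V (pointwiseFixer W.1) ≠ ⊥ := by
  classical
  have hsum : ∑ g : (Matrix (Fin n) (Fin n) F)ˣ,
      ((Fintype.card F : ℂ) ^ fixdim g) ^ k * V.character g⁻¹ =
      ∑ X : Fin k → Fin n → F, ∑ h : pointwiseFixer (Submodule.span F (Set.range X)),
        V.character h := by
    have h1 : ∀ g : (Matrix (Fin n) (Fin n) F)ˣ, ((Fintype.card F : ℂ) ^ fixdim g) ^ k =
        ∑ X : Fin k → Fin n → F,
          if g ∈ pointwiseFixer (Submodule.span F (Set.range X)) then (1 : ℂ) else 0 := fun g => by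
      rw [Finset.sum_boole, ← Fintype.card_subtype]
      exact_mod_cast card_pow_fixdim_pow g k
    simp only [h1, Finset.sum_mul]
    rw [Finset.sum_comm]
    refine Finset.sum_congr rfl fun X _ => ?_
    rw [← Equiv.sum_comp (Equiv.inv (Matrix (Fin n) (Fin n) F)ˣ)]
    simp only [Equiv.inv_apply, inv_inv, Subgroup.inv_mem_iff, ite_mul, one_mul, zero_mul]
    rw [← Finset.sum_filter]
    exact Finset.sum_subtype _ (by simp) _
  rw [hsum] at hV
  obtain ⟨X, _, hX⟩ := Finset.exists_ne_zero_of_sum_ne_zero hV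
  rw [sum_character_subgroup] at hX
  have hne : fixedSubmodule V (pointwiseFixer (Submodule.span F (Set.range X))) ≠ ⊥ := by
    intro h
    rw [h] at hX
    simp at hX
  obtain ⟨W, hXW, hW⟩ := exists_le_finrank_eq (Submodule.span F (Set.range X)) (k := k)
    ((finrank_range_le_card (R := F) X).trans (Fintype.card_fin k).le) (by simpa using hk)
  refine ⟨⟨W, hW⟩, fun h => hne (le_bot_iff.1 ?_)⟩
  rw [← h]
  intro v hv
  rw [mem_fixedSubmodule] at hv ⊢
  exact fun g hg => hv g fun w hw => hg w (hXW hw)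

end GeneralLinear

/-- **Theorem (lower bound for `GL_n(q)`).**  Let `F` be a finite field with `q` elements,
`n ≥ 3`, and `η` a complex representation of `G = GL_n(F)` whose character satisfies
`χ^η(g) = q^{dim ker(g−1)}` (the Weil representation).  Let `K` be the tensor product
Markov chain on `Irr(G)` associated with `η`, started at the trivial representation, and
`π` the Plancherel measure.  Then for every `c` with `1 ≤ c ≤ n−1` and `r = n−c`,
`‖K^r_𝟙 − π‖_TV ≥ 1 − 11.25·q^{2−2c} − 18·q^{1−c}`. -/
theorem gl_weil_lower_bound {F : Type} [Field F] [Fintype F] [DecidableEq F]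
    {q n : ℕ} (hq : Fintype.card F = q) (hn : 3 ≤ n)
    {ι : Type} [Fintype ι] [DecidableEq ι]
    (rep : ι → FDRep ℂ (Matrix (Fin n) (Fin n) F)ˣ)
    (hsimple : ∀ i, Simple (rep i))
    (hcomplete : ∀ V : FDRep ℂ (Matrix (Fin n) (Fin n) F)ˣ, Simple V →
      ∃ i, Nonempty (V ≅ rep i))
    (hinj : ∀ i j : ι, Nonempty (rep i ≅ rep j) → i = j)
    (triv : ι) (htriv : ∀ g : (Matrix (Fin n) (Fin n) F)ˣ, (rep triv).character g = 1)
    (η : FDRep ℂ (Matrix (Fin n) (Fin n) F)ˣ)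
    (hη : ∀ g : (Matrix (Fin n) (Fin n) F)ˣ, η.character g = (q : ℂ) ^ fixdim g)
    (c : ℕ) (hc1 : 1 ≤ c) (hc2 : c ≤ n - 1) :
    1 - 11.25 * (q : ℝ) ^ (2 - 2 * (c : ℤ)) - 18 * (q : ℝ) ^ (1 - (c : ℤ)) ≤
      tvDist (fun ρ => (tensorChain rep η ^ (n - c)) triv ρ) (plancherel rep) := by
  subst hq
  classical
  have hcn : c ≤ n := by omega
  have hq2 : (2 : ℝ) ≤ Fintype.card F := by exact_mod_cast Fintype.one_lt_card (α := F)
  have hη0 : Nontrivial η := by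
    by_contra h
    rw [not_nontrivial_iff_subsingleton] at h
    have := hη 1
    rw [character_eq_zero_of_subsingleton] at this
    exact pow_ne_zero _ (by exact_mod_cast Fintype.card_ne_zero) this.symm
  have : Fintype {W : Submodule F (Fin n → F) // Module.finrank F W = n - c} := Fintype.ofFinite _
  have hmain := one_sub_sum_inv_card_le_tvDist rep hsimple hcomplete hinj triv htriv η (n - c)
    (fun W : {W : Submodule F (Fin n → F) // Module.finrank F W = n - c} => pointwiseFixer W.1)
    (fun W g => by
      obtain ⟨W', hW', h⟩ := exists_conj_mem_pointwiseFixer W.1 g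
      exact ⟨⟨W', hW'.trans W.2⟩, h⟩)
    (fun V hV => exists_fixedSubmodule_pointwiseFixer_ne_bot (Nat.sub_le n c) V
      (by simpa only [hη] using hV))
  have hbound := (sum_inv_card_pointwiseFixer_le (F := F) hcn).trans (four_pow_div_pow_le hq2 hc1)
  have hpos : (0 : ℝ) < (Fintype.card F : ℝ) ^ (2 - 2 * (c : ℤ)) := zpow_pos (by linarith) _
  linarith
end
end
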